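/- Let (N, v) be a symmetric aversion-to-enemies game on n = |N| agents, and let G' be the simple graph on N whose edges are the pairs {i,j} with v(i,j) = 1. If G' is k-partite (i.e., N can be partitioned into k classes such that no edge of G' joins two agents of the same class), then every partition π of N satisfies SW(π) ≤ n·(k − 1). -/

import Mathlib

/-- A partition of a finite set of agents, represented by the function
assigning to each agent the coalition (finset) containing it. -/
structure AgentPartition (α : Type*) [DecidableEq α] [Fintype α] where
  part : α → Finset α
  mem_part : ∀ i, i ∈ part i
  part_eq_of_mem : ∀ i j, j ∈ part i → part j = part i

variable {α : Type*} [DecidableEq α] [Fintype α]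

/-- Social welfare of a partition in the ASHG with valuations `v`. -/
noncomputable def SW (v : α → α → ℝ) (π : AgentPartition α) : ℝ :=
  ∑ i, ∑ j ∈ π.part i, v i j

/-- Correlation welfare of a partition in the ASHG with valuations `v`. -/
noncomputable def CW (v : α → α → ℝ) (π : AgentPartition α) : ℝ :=
  (1 / 2) * ∑ i, ((∑ j ∈ π.part i, v i j) - ∑ j ∈ (π.part i)ᶜ, v i j)

/-- Total value of the ASHG with valuations `v`. -/
noncomputable def TV (α : Type*) [Fintype α] (v : α → α → ℝ) : ℝ :=
  ∑ i, ∑ j, v i j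

/-
Replace the valuations by the upper bound which is `1` between agents of different classes, `1 - k`
between distinct agents of the same class, and `0` on the diagonal. In a coalition of size `m` with
`m_a` agents in class `a`, these bounds add up to `m ^ 2 - k * ∑ a, m_a ^ 2 + (k - 1) * m`, and
Cauchy–Schwarz gives `m ^ 2 ≤ k * ∑ a, m_a ^ 2`. So the agents of the coalition have total utility
at most `(k - 1) * m`, and summing over the coalitions gives the bound. The enemy value `-n` is
below `1 - k` once the empty classes are dropped, since then `k ≤ n`.
-/

section SumOverColorClasses

open Finset

variable {ι κ R : Type*}

theorem sq_card_le_card_mul_sum_card_fiber [DecidableEq κ] {s : Finset ι} {t : Finset κ}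
    {c : ι → κ} (hc : ∀ i ∈ s, c i ∈ t) :
    #s ^ 2 ≤ #t * ∑ i ∈ s, #{j ∈ s | c j = c i} := by
  have sum_sq : ∑ a ∈ t, #{j ∈ s | c j = a} ^ 2 = ∑ i ∈ s, #{j ∈ s | c j = c i} := by
    simp only [← sum_fiberwise_of_maps_to' hc fun a => #{j ∈ s | c j = a}, sum_const,
      smul_eq_mul, sq]
  calc #s ^ 2 = (∑ a ∈ t, #{j ∈ s | c j = a}) ^ 2 := by rw [card_eq_sum_card_fiberwise hc]
    _ ≤ #t * ∑ a ∈ t, #{j ∈ s | c j = a} ^ 2 := sq_sum_le_card_mul_sum_sq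
    _ = #t * ∑ i ∈ s, #{j ∈ s | c j = c i} := by rw [sum_sq]

variable [CommRing R] [LinearOrder R] [IsStrictOrderedRing R] {s : Finset ι} {c : ι → κ}

theorem sum_le_card_sub_mul_card_fiber [DecidableEq κ] {w : ι → R} {r : R} {i : ι} (hi : i ∈ s)
    (hself : w i ≤ 0) (hle : ∀ j ∈ s, i ≠ j → w j ≤ 1)
    (hsame : ∀ j ∈ s, i ≠ j → c i = c j → w j ≤ 1 - r) :
    ∑ j ∈ s, w j ≤ #s - r * #{j ∈ s | c j = c i} + (r - 1) := by
  classical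
  have pointwise (j : ι) (hj : j ∈ s) :
      w j ≤ 1 - r * (if c j = c i then 1 else 0) + (if i = j then r - 1 else 0) := by
    rcases eq_or_ne i j with rfl | hij
    · simpa using hself
    by_cases hcol : c j = c i
    · simpa [hij, hcol] using hsame j hj hij hcol.symm
    · simpa [hij, hcol] using hle j hj hij
  calc ∑ j ∈ s, w j
      ≤ ∑ j ∈ s, (1 - r * (if c j = c i then 1 else 0) + (if i = j then r - 1 else 0)) :=
        sum_le_sum pointwise
    _ = #s - r * #{j ∈ s | c j = c i} + (r - 1) := by
        simp only [sum_add_distrib, sum_sub_distrib, ← mul_sum, sum_boole, sum_ite_eq, if_pos hi,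
          sum_const, nsmul_one]

theorem sum_sum_le_card_mul_card_sub_one {v : ι → ι → R} {t : Finset κ} (hc : ∀ i ∈ s, c i ∈ t)
    (hself : ∀ i ∈ s, v i i ≤ 0) (hle : ∀ i ∈ s, ∀ j ∈ s, i ≠ j → v i j ≤ 1)
    (hsame : ∀ i ∈ s, ∀ j ∈ s, i ≠ j → c i = c j → v i j ≤ 1 - #t) :
    ∑ i ∈ s, ∑ j ∈ s, v i j ≤ #s * ((#t : R) - 1) := by
  classical
  have utility_le (i) (hi : i ∈ s) :
      ∑ j ∈ s, v i j ≤ #s - #t * #{j ∈ s | c j = c i} + (#t - 1) :=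
    sum_le_card_sub_mul_card_fiber (c := c) hi (hself i hi) (hle i hi) (hsame i hi)
  have cauchy_schwarz : (#s : R) ^ 2 ≤ #t * ∑ i ∈ s, (#{j ∈ s | c j = c i} : R) :=
    mod_cast sq_card_le_card_mul_sum_card_fiber hc
  calc ∑ i ∈ s, ∑ j ∈ s, v i j
      ≤ ∑ i ∈ s, ((#s : R) - #t * #{j ∈ s | c j = c i} + (#t - 1)) :=
        sum_le_sum utility_le
    _ = (#s : R) ^ 2 - #t * ∑ i ∈ s, (#{j ∈ s | c j = c i} : R) + #s * ((#t : R) - 1) := by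
        rw [sum_add_distrib, sum_sub_distrib, ← mul_sum, sum_const, sum_const, nsmul_eq_mul,
          nsmul_eq_mul, sq]
    _ ≤ #s * ((#t : R) - 1) := by linarith

end SumOverColorClasses

namespace AgentPartition

open Finset

variable (π : AgentPartition α)

/-- The set of coalitions of a partition, each listed once; this is the partition in the usual
sense, recovered from the encoding by the function `part`. -/
def coalitions : Finset (Finset α) := univ.image π.part

theorem filter_part_eq_part (i : α) : ({j | π.part j = π.part i} : Finset α) = π.part i := by
  ext j
  simpa using ⟨fun h => h ▸ π.mem_part j, π.part_eq_of_mem i j⟩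

theorem sum_coalitions {M : Type*} [AddCommMonoid M] (g : Finset α → α → M) :
    ∑ C ∈ π.coalitions, ∑ i ∈ C, g C i = ∑ i, g (π.part i) i := by
  rw [← sum_fiberwise_of_maps_to (t := π.coalitions) fun i hi => mem_image_of_mem π.part hi]
  refine sum_congr rfl fun C hC => ?_
  obtain ⟨i, -, rfl⟩ := mem_image.mp hC
  rw [filter_part_eq_part]
  exact sum_congr rfl fun j hj => by rw [π.part_eq_of_mem i j hj]

theorem sum_card_coalitions : ∑ C ∈ π.coalitions, #C = Fintype.card α := by
  simpa only [card_eq_sum_ones, Fintype.card] using π.sum_coalitions fun _ _ => 1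

end AgentPartition

open Finset in
theorem sw_le_of_multipartite_general {κ : Type*} [DecidableEq κ] (v : α → α → ℝ)
    (hself : ∀ i, v i i ≤ 0) (hle : ∀ i j, i ≠ j → v i j ≤ 1) (f : α → κ)
    (hsame : ∀ i j, i ≠ j → f i = f j → v i j ≤ 1 - #(univ.image f)) (π : AgentPartition α) :
    SW v π ≤ (Fintype.card α : ℝ) * ((#(univ.image f) : ℝ) - 1) :=
  calc SW v π = ∑ C ∈ π.coalitions, ∑ i ∈ C, ∑ j ∈ C, v i j :=
        (π.sum_coalitions fun C i => ∑ j ∈ C, v i j).symm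
    _ ≤ ∑ C ∈ π.coalitions, (#C : ℝ) * ((#(univ.image f) : ℝ) - 1) :=
        sum_le_sum fun C _ => sum_sum_le_card_mul_card_sub_one
          (fun i _ => mem_image_of_mem f (mem_univ i)) (fun i _ => hself i)
          (fun i _ j _ => hle i j) (fun i _ j _ => hsame i j)
    _ = (Fintype.card α : ℝ) * ((#(univ.image f) : ℝ) - 1) := by
        rw [← sum_mul, ← Nat.cast_sum, π.sum_card_coalitions]

theorem sw_le_of_multipartite (v : α → α → ℝ)
    (hv : ∀ i, v i i = 0) (hsym : ∀ i j, v i j = v j i)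
    (hav : ∀ i j : α, i ≠ j →
      v i j = -(Fintype.card α : ℝ) ∨ v i j = 1)
    (G' : SimpleGraph α)
    (hG : ∀ i j, G'.Adj i j ↔ i ≠ j ∧ v i j = 1)
    (k : ℕ) (f : α → Fin k)
    (hcolor : ∀ i j, G'.Adj i j → f i ≠ f j)
    (π : AgentPartition α) :
    SW v π ≤ (Fintype.card α : ℝ) * ((k : ℝ) - 1) := by
  have hle (i j) (hij : i ≠ j) : v i j ≤ 1 :=
    (hav i j hij).elim (fun h => by linarith [(Fintype.card α).cast_nonneg (α := ℝ)]) Eq.le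
  have hsame (i j) (hij : i ≠ j) (hf : f i = f j) : v i j = -(Fintype.card α : ℝ) :=
    (hav i j hij).resolve_right fun h => hcolor i j ((hG i j).mpr ⟨hij, h⟩) hf
  have classes_le_agents : ((Finset.univ.image f).card : ℝ) ≤ Fintype.card α :=
    mod_cast Finset.card_image_le
  have classes_le : ((Finset.univ.image f).card : ℝ) ≤ k :=
    mod_cast card_finset_fin_le (Finset.univ.image f)
  calc SW v π ≤ (Fintype.card α : ℝ) * (((Finset.univ.image f).card : ℝ) - 1) :=
        sw_le_of_multipartite_general v (fun i => (hv i).le) hle f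
          (fun i j hij hf => by linarith [hsame i j hij hf]) π
    _ ≤ (Fintype.card α : ℝ) * ((k : ℝ) - 1) := by gcongr
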